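/- arXiv:2406.16733 — 6 statements merged into one kernel-verified Lean document; each statement's English description precedes it below -/
import Mathlib

section
/- For every ε > 0 there exists C > 0 such that: for every η > 0 there exists N such that for every finite group G acting transitively on a finite set Ω with |Ω| = n ≥ N, every integer k ≥ (log n)^(1+ε), and every ω ∈ Ω, the proportion of tuples A ∈ G^k for which |S_A(ω, ⌊C·(log n)/(log k)⌋)| ≥ n / k^(ε/2) is at least 1 − η. -/
/-!
The theorem follows from a second-moment computation, with no step-by-step growth argument.

Put `t = ⌊C log n / log k⌋` and `m = ⌊k / t⌋`, and cut (part of) `Fin k` into `t` disjoint blocks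
of size `m`. A *block word* picks one index from each block, so there are `m ^ t` of them, and each
block word `w` gives a point `w • ω` of the sphere of radius `t`. Two distinct block words agree up
to some position; cancelling the common outer factors, their endpoints coincide iff
`g • y = z`, where `g` is an entry of `A` that influences neither `y` nor `z`. By transitivity this
has probability exactly `1 / n` (`collision_card`). Hence the number `X` of ordered pairs of block words
with a common endpoint has mean at most `m ^ t + m ^ (2 * t) / n`, which is at most
`2 * m ^ (2 * t) / n` as soon as `n ≤ m ^ t`.
By Cauchy–Schwarz the endpoints make up at least `m ^ (2 * t) / X` points (`card_sq_le`), so Markov's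
inequality shows that the sphere has fewer than `n / κ` points with probability at most `2 / κ`
(`bad_card_le`). With `κ = k ^ (ε / 2)` this tends to `0`.

For `C = (6 + 2 ε) / ε` and `n` large the inequality `n ≤ m ^ t` holds whenever
`k ^ (ε / 2) < n` (`growth_numerics`): the bound `log n ≤ k ^ (1 / (1 + ε))` makes `m` at least
`k ^ (ε / (1 + ε))`. In the remaining case `n ≤ k ^ (ε / 2)` a single point is enough.
-/

open scoped ENNReal Pointwise

/-- The proportion of tuples `A ∈ G^k` satisfying the predicate `P`. -/
noncomputable def tupleProp (G : Type*) [Fintype G] {k : ℕ} (P : (Fin k → G) → Prop) : ℝ :=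
  (Nat.card {A : Fin k → G // P A} : ℝ) / (Fintype.card G : ℝ) ^ k

/-- The sphere of radius `t` centered at `ω` in the Schreier graph of the action of `G` on `Ω`
with respect to the tuple `A`: the set of points reachable from `ω` by applying a product of
exactly `t` entries of `A`. -/
def sphereSet {G Ω : Type*} [Group G] [MulAction G Ω] {k : ℕ}
    (A : Fin k → G) (ω : Ω) (t : ℕ) : Set Ω :=
  {x | ∃ f : Fin t → Fin k, (List.ofFn (A ∘ f)).prod • ω = x}

/-- The diameter of the Schreier graph of the action of `G` on `Ω` with respect to the tuple
`A ∈ G^k`: the least natural number `D` such that any `y` can be reached from any `x` by applying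
a product of `d ≤ D` entries of `A`, and `∞` if no such `D` exists. -/
noncomputable def schreierDiam (G Ω : Type*) [Group G] [MulAction G Ω] {k : ℕ}
    (A : Fin k → G) : ℕ∞ :=
  sInf {D : ℕ∞ | ∃ D₀ : ℕ, D = (D₀ : ℕ∞) ∧ ∀ x y : Ω, ∃ d : ℕ, d ≤ D₀ ∧
    ∃ f : Fin d → Fin k, (List.ofFn (A ∘ f)).prod • x = y}

/-! ### Collision probabilities of words -/

/-- In a transitive action each of the `n` points is hit from `x` by `|G| / n` group elements. -/
lemma card_smul_eq {G Ω : Type} [Group G] [Fintype G] [MulAction G Ω] [Fintype Ω]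
    [DecidableEq Ω] (hT : MulAction.IsPretransitive G Ω) (x z : Ω) :
    (Finset.univ.filter (fun g : G => g • x = z)).card * Fintype.card Ω = Fintype.card G := by
  have hc : ∀ y : Ω, (Finset.univ.filter (fun g : G => g • x = y)).card
      = (Finset.univ.filter (fun g : G => g • x = z)).card := by
    intro y
    obtain ⟨h, hh⟩ := hT.exists_smul_eq y z
    refine Finset.card_bij (fun g _ => h * g) ?_ ?_ ?_
    · intro g hg
      simp only [Finset.mem_filter, Finset.mem_univ, true_and] at hg ⊢
      rw [mul_smul, hg, hh]
    · intro a _ b _ hab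
      exact mul_left_cancel hab
    · intro g hg
      simp only [Finset.mem_filter, Finset.mem_univ, true_and] at hg
      refine ⟨h⁻¹ * g, ?_, by simp⟩
      simp only [Finset.mem_filter, Finset.mem_univ, true_and]
      rw [mul_smul, hg, ← hh, inv_smul_smul]
  have := Finset.card_eq_sum_card_fiberwise (s := (Finset.univ : Finset G))
    (t := (Finset.univ : Finset Ω)) (f := fun g => g • x) (by intro a _; simp)
  rw [Finset.card_univ] at this
  rw [this, Finset.sum_congr rfl (fun y _ => hc y)]
  simp [mul_comm]

/-- If `y` and `z` do not depend on the `i`-th entry of the tuple, the event `A i • y A = z A` has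
probability exactly `1 / n`: averaging over left translations of the entry `A i` reduces this to
`card_smul_eq`. -/
lemma card_indep_smul_eq {G Ω : Type} [Group G] [Fintype G] [MulAction G Ω] [Fintype Ω]
    [DecidableEq Ω] (hT : MulAction.IsPretransitive G Ω) {k : ℕ} (i : Fin k)
    (y z : (Fin k → G) → Ω) (hy : ∀ A g, y (Function.update A i g) = y A)
    (hz : ∀ A g, z (Function.update A i g) = z A) :
    (Finset.univ.filter (fun A : Fin k → G => A i • y A = z A)).card * Fintype.card Ω
      = Fintype.card G ^ k := by
  have h1 : ∀ g : G, (Finset.univ.filter (fun A : Fin k → G => A i • y A = z A)).card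
      = (Finset.univ.filter (fun A : Fin k → G => g • (A i • y A) = z A)).card := by
    intro g
    symm
    refine Finset.card_bij (fun A _ => Function.update A i (g * A i)) ?_ ?_ ?_
    · intro A hA
      simp only [Finset.mem_filter, Finset.mem_univ, true_and] at hA ⊢
      rw [hy, hz, Function.update_self, mul_smul, hA]
    · intro A _ B _ hAB
      funext j
      have := congrFun hAB j
      by_cases hj : j = i
      · subst hj
        simpa using this
      · simpa [Function.update_of_ne hj] using this
    · intro A hA
      simp only [Finset.mem_filter, Finset.mem_univ, true_and] at hA
      refine ⟨Function.update A i (g⁻¹ * A i), ?_, by simp⟩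
      simp only [Finset.mem_filter, Finset.mem_univ, true_and]
      rw [hy, hz, Function.update_self, mul_smul, smul_inv_smul, hA]
  have hG : 0 < Fintype.card G := Fintype.card_pos
  apply Nat.eq_of_mul_eq_mul_left hG
  have h2 : Fintype.card G * (Finset.univ.filter (fun A : Fin k → G => A i • y A = z A)).card
      = ∑ A : Fin k → G, (Finset.univ.filter (fun g : G => g • (A i • y A) = z A)).card := by
    calc _ = ∑ g : G, (Finset.univ.filter
              (fun A : Fin k → G => g • (A i • y A) = z A)).card := by
            rw [← Finset.sum_congr rfl (fun g _ => h1 g)]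
            simp
      _ = _ := by
            simp only [Finset.card_filter]
            exact Finset.sum_comm
  rw [← mul_assoc, h2, Finset.sum_mul, Finset.sum_congr rfl (fun A _ => card_smul_eq hT _ _)]
  simp [mul_comm]

/-- Two distinct words that use disjoint sets of indices at different positions have the same
endpoint with probability exactly `1 / n`. -/
lemma collision_card {G Ω : Type} [Group G] [Fintype G] [MulAction G Ω] [Fintype Ω]
    [DecidableEq Ω] (hT : MulAction.IsPretransitive G Ω) {k : ℕ} (ω : Ω) :
    ∀ (t : ℕ) (f f' : Fin t → Fin k), f ≠ f' →
      (∀ p q, p ≠ q → f p ≠ f q ∧ f p ≠ f' q) →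
      (Finset.univ.filter (fun A : Fin k → G =>
        (List.ofFn (A ∘ f)).prod • ω = (List.ofFn (A ∘ f')).prod • ω)).card * Fintype.card Ω
        = Fintype.card G ^ k := by
  intro t
  induction t with
  | zero =>
    intro f f' hne
    exact absurd (Subsingleton.elim f f') hne
  | succ t ih =>
    intro f f' hne hd
    by_cases h0 : f 0 = f' 0
    · rw [← ih (fun p => f p.succ) (fun p => f' p.succ) ?_ ?_]
      · congr 2
        ext A
        simp only [Finset.mem_filter, Finset.mem_univ, true_and, List.ofFn_succ, List.prod_cons,
          mul_smul, Function.comp_apply, h0, smul_left_cancel_iff]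
        rfl
      · intro h
        apply hne
        funext p
        refine Fin.cases h0 (fun q => congrFun h q) p
      · intro p q hpq
        exact hd p.succ q.succ (fun h => hpq (Fin.succ_injective _ h))
    · have hu : ∀ (s : Fin t → Fin k), (∀ q, f 0 ≠ s q) → ∀ (A : Fin k → G) g,
          (Function.update A (f 0) g) ∘ s = A ∘ s := by
        intro s hs A g
        funext q
        simp [Function.update_of_ne (hs q).symm]
      have key := card_indep_smul_eq hT (G := G) (f 0)
        (fun A => (List.ofFn (A ∘ fun p : Fin t => f p.succ)).prod • ω)
        (fun A => A (f' 0) • (List.ofFn (A ∘ fun p : Fin t => f' p.succ)).prod • ω)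
        (by
          intro A g
          rw [hu _ (fun q => (hd 0 q.succ (Fin.succ_ne_zero q).symm).1)])
        (by
          intro A g
          rw [hu _ (fun q => (hd 0 q.succ (Fin.succ_ne_zero q).symm).2),
            Function.update_of_ne (Ne.symm h0)])
      rw [← key]
      congr 2
      ext A
      simp only [Finset.mem_filter, Finset.mem_univ, true_and, List.ofFn_succ, List.prod_cons,
        mul_smul, Function.comp_apply]
      rfl

/-! ### The second-moment bound -/

/-- Cauchy–Schwarz: a map with few collisions has a large image. -/
lemma card_sq_le {W Ω : Type*} [Fintype W] [DecidableEq Ω] (F : W → Ω) :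
    Fintype.card W ^ 2 ≤ (Finset.univ.image F).card *
      (Finset.univ.filter (fun p : W × W => F p.1 = F p.2)).card := by
  have h1 : Fintype.card W = ∑ x ∈ Finset.univ.image F,
      (Finset.univ.filter (fun a => F a = x)).card := by
    rw [← Finset.card_univ]
    exact Finset.card_eq_sum_card_image F _
  have h2 : (Finset.univ.filter (fun p : W × W => F p.1 = F p.2)).card
      = ∑ x ∈ Finset.univ.image F, (Finset.univ.filter (fun a => F a = x)).card ^ 2 := by
    rw [Finset.card_eq_sum_card_fiberwise (f := fun p : W × W => F p.1)
      (t := Finset.univ.image F) (by intro a _; simp)]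
    refine Finset.sum_congr rfl (fun x _ => ?_)
    rw [sq, ← Finset.card_product]
    congr 1
    ext ⟨a, b⟩
    simp only [Finset.mem_filter, Finset.mem_univ, true_and, Finset.mem_product]
    grind
  rw [h2, h1]
  exact sq_sum_le_card_mul_sum_sq

/-- Second-moment bound: if the number `m ^ t` of block words is at least `n`, then the sphere of
radius `t` has fewer than `n / κ` points with probability at most `2 / κ`. -/
lemma bad_card_le {G Ω : Type} [Group G] [Fintype G] [MulAction G Ω] [Fintype Ω]
    (hT : MulAction.IsPretransitive G Ω) {k : ℕ} (ω : Ω) (t m : ℕ) (htm : t * m ≤ k)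
    (hn : Fintype.card Ω ≤ m ^ t) (κ : ℝ) (hκ : 0 < κ) :
    (Nat.card {A : Fin k → G // ¬ (Fintype.card Ω : ℝ) / κ ≤ ((sphereSet A ω t).ncard : ℝ)} : ℝ)
      * κ ≤ 2 * (Fintype.card G : ℝ) ^ k := by
  classical
  have : Nonempty Ω := ⟨ω⟩
  set n := Fintype.card Ω with hn_def
  have hn0 : 0 < n := Fintype.card_pos
  -- The `a`-th index of block `p`.
  let e : Fin t → Fin m → Fin k := fun p a => Fin.castLE htm (finProdFinEquiv (p, a))
  have he : ∀ p q a b, e p a = e q b → p = q ∧ a = b := by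
    intro p q a b h
    have := finProdFinEquiv.injective (Fin.castLE_injective htm h)
    simpa using this
  let w : (Fin t → Fin m) → Fin t → Fin k := fun a p => e p (a p)
  have hw : ∀ a b, a ≠ b → w a ≠ w b := by
    intro a b hab h
    apply hab
    funext p
    exact (he _ _ _ _ (congrFun h p)).2
  let F : (Fin k → G) → (Fin t → Fin m) → Ω := fun A a => (List.ofFn (A ∘ w a)).prod • ω
  let X : (Fin k → G) → ℕ := fun A =>
    (Finset.univ.filter (fun p : (Fin t → Fin m) × (Fin t → Fin m) => F A p.1 = F A p.2)).card
  have hM : Fintype.card (Fin t → Fin m) = m ^ t := by simp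
  set M := m ^ t with hM_def
  have hpair : ∀ p : (Fin t → Fin m) × (Fin t → Fin m),
      (Finset.univ.filter (fun A : Fin k → G => F A p.1 = F A p.2)).card * n
        ≤ Fintype.card G ^ k + if p.1 = p.2 then Fintype.card G ^ k * n else 0 := by
    rintro ⟨a, b⟩
    by_cases hab : a = b
    · subst hab
      simp
    · have := collision_card (G := G) hT ω t (w a) (w b) (hw a b hab) (by
        intro p q hpq
        exact ⟨fun h => hpq (he _ _ _ _ h).1, fun h => hpq (he _ _ _ _ h).1⟩)
      simp only [hab, if_false, add_zero]
      exact this.le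
  have hsum : (∑ A, X A) * n ≤ 2 * M ^ 2 * Fintype.card G ^ k := by
    have hswap : ∑ A, X A = ∑ p : (Fin t → Fin m) × (Fin t → Fin m),
        (Finset.univ.filter (fun A : Fin k → G => F A p.1 = F A p.2)).card := by
      simp only [X, Finset.card_filter]
      exact Finset.sum_comm
    have hdiag : ∑ p : (Fin t → Fin m) × (Fin t → Fin m),
        (if p.1 = p.2 then Fintype.card G ^ k * n else 0) = M * (Fintype.card G ^ k * n) := by
      rw [Fintype.sum_prod_type]
      simp [hM_def]
    calc (∑ A, X A) * n ≤ ∑ p : (Fin t → Fin m) × (Fin t → Fin m),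
          (Fintype.card G ^ k + if p.1 = p.2 then Fintype.card G ^ k * n else 0) := by
          rw [hswap, Finset.sum_mul]
          exact Finset.sum_le_sum (fun p _ => hpair p)
      _ = M ^ 2 * Fintype.card G ^ k + M * Fintype.card G ^ k * n := by
          rw [Finset.sum_add_distrib, hdiag]
          simp [hM_def]
          ring
      _ ≤ 2 * M ^ 2 * Fintype.card G ^ k := by
          have : M * Fintype.card G ^ k * n ≤ M * Fintype.card G ^ k * M := by gcongr
          nlinarith
  have hM0 : 0 < M := lt_of_lt_of_le hn0 hn
  have hMr : (0 : ℝ) < M := by exact_mod_cast hM0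
  have hnr : (0 : ℝ) < n := by exact_mod_cast hn0
  have hbad : ∀ A : Fin k → G, ¬ (n : ℝ) / κ ≤ ((sphereSet A ω t).ncard : ℝ) →
      (M : ℝ) ^ 2 * κ ≤ X A * n := by
    intro A hA
    push Not at hA
    have hsub : ((Finset.univ.image (F A) : Finset Ω) : Set Ω) ⊆ sphereSet A ω t := by
      intro x hx
      simp only [Finset.coe_image, Finset.coe_univ, Set.image_univ, Set.mem_range] at hx
      obtain ⟨a, rfl⟩ := hx
      exact ⟨w a, rfl⟩
    have hle : (Finset.univ.image (F A)).card ≤ (sphereSet A ω t).ncard := by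
      rw [← Set.ncard_coe_finset]
      exact Set.ncard_le_ncard hsub (Set.toFinite _)
    have hcs := card_sq_le (F A)
    rw [hM] at hcs
    have h1 : (M : ℝ) ^ 2 ≤ (sphereSet A ω t).ncard * X A := by
      have : M ^ 2 ≤ (sphereSet A ω t).ncard * X A := hcs.trans (by gcongr)
      exact_mod_cast this
    rw [lt_div_iff₀ hκ] at hA
    have hX : (0 : ℝ) ≤ X A := Nat.cast_nonneg _
    nlinarith [mul_le_mul_of_nonneg_left hA.le hX, mul_le_mul_of_nonneg_right h1 hκ.le]
  rw [Nat.card_eq_fintype_card, Fintype.card_subtype]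
  set B := Finset.univ.filter
    (fun A : Fin k → G => ¬ (n : ℝ) / κ ≤ ((sphereSet A ω t).ncard : ℝ)) with hB
  have hmarkov : (B.card : ℝ) * ((M : ℝ) ^ 2 * κ) ≤ 2 * (M : ℝ) ^ 2 * (Fintype.card G : ℝ) ^ k := by
    calc (B.card : ℝ) * ((M : ℝ) ^ 2 * κ) = ∑ A ∈ B, (M : ℝ) ^ 2 * κ := by simp
      _ ≤ ∑ A ∈ B, (X A : ℝ) * n := Finset.sum_le_sum (fun A hA => hbad A (by
          simpa [hB] using hA))
      _ ≤ ∑ A, (X A : ℝ) * n := Finset.sum_le_sum_of_subset_of_nonneg (Finset.subset_univ _)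
          (fun _ _ _ => by positivity)
      _ = (((∑ A, X A) * n : ℕ) : ℝ) := by
          push_cast
          rw [Finset.sum_mul]
      _ ≤ ((2 * M ^ 2 * Fintype.card G ^ k : ℕ) : ℝ) := by exact_mod_cast hsum
      _ = _ := by push_cast; ring
  have hM2 : (0 : ℝ) < (M : ℝ) ^ 2 := by positivity
  apply le_of_mul_le_mul_left _ hM2
  linarith

/-! ### Choice of the number of blocks -/

/-- With `t = ⌊C log n / log k⌋`, the `t` blocks of size `⌊k / t⌋` provide at least `n` block words,
as long as `log k` is below `(2 / ε) log n`. -/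
lemma growth_numerics (ε : ℝ) (hε : 0 < ε) (n k : ℕ) (hn : 0 < n)
    (hL : 1 ≤ Real.log n) (hk : Real.log n ^ ((1 : ℝ) + ε) ≤ k)
    (hlogk : 2 * ((6 + 2 * ε) / ε) ≤ Real.log k)
    (hkn : ε / 2 * Real.log k ≤ Real.log n) :
    n ≤ (k / ⌊(6 + 2 * ε) / ε * Real.log n / Real.log k⌋₊) ^
      ⌊(6 + 2 * ε) / ε * Real.log n / Real.log k⌋₊ := by
  set L := Real.log n with hLdef
  set K := Real.log k with hKdef
  set C := (6 + 2 * ε) / ε with hC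
  have hCε : C * ε = 6 + 2 * ε := by rw [hC]; field_simp
  have hC0 : 0 < C := by positivity
  have hK0 : 0 < K := by linarith
  have hk0 : (0 : ℝ) < k := by
    have : (0 : ℝ) < L ^ (1 + ε) := by positivity
    linarith
  set t := ⌊C * L / K⌋₊ with ht
  set δ := ε / (1 + ε) with hδ
  have hδ0 : 0 < δ := by positivity
  have hu : 3 ≤ C * L / K := by
    rw [le_div_iff₀ hK0]
    have : C * (ε / 2 * K) ≤ C * L := by gcongr
    nlinarith
  have htu : (t : ℝ) ≤ C * L / K := Nat.floor_le (by positivity)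
  have htl : C * L / K / 2 ≤ t := by
    have := Nat.lt_floor_add_one (C * L / K)
    rw [← ht] at this
    linarith
  have ht0 : (0 : ℝ) < t := by linarith
  have hLk : L ≤ (k : ℝ) ^ (1 / (1 + ε)) := by
    have h := Real.rpow_le_rpow (by positivity) hk (by positivity : 0 ≤ 1 / (1 + ε))
    rwa [← Real.rpow_mul (by linarith), mul_one_div_cancel (by positivity), Real.rpow_one] at h
  have hsplit : (k : ℝ) ^ δ * (k : ℝ) ^ (1 / (1 + ε)) = k := by
    rw [← Real.rpow_add hk0]
    have : δ + 1 / (1 + ε) = 1 := by rw [hδ]; field_simp; ring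
    rw [this, Real.rpow_one]
  have hkδ0 : 0 < (k : ℝ) ^ δ := by positivity
  have hkt : 2 * (k : ℝ) ^ δ ≤ k / t := by
    rw [le_div_iff₀ ht0]
    have h1 : (t : ℝ) * K ≤ C * L := by rwa [le_div_iff₀ hK0] at htu
    have h2 : 2 * (t : ℝ) ≤ L := by
      have : (t : ℝ) * (2 * C) ≤ C * L := (mul_le_mul_of_nonneg_left hlogk ht0.le).trans h1
      have : C * (2 * t) ≤ C * L := by linarith
      exact le_of_mul_le_mul_left this hC0
    calc 2 * (k : ℝ) ^ δ * t = (k : ℝ) ^ δ * (2 * t) := by ring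
      _ ≤ (k : ℝ) ^ δ * (k : ℝ) ^ (1 / (1 + ε)) := by gcongr; exact h2.trans hLk
      _ = k := hsplit
  have hk1 : (1 : ℝ) ≤ k := by
    have : (1 : ℝ) ≤ L ^ (1 + ε) := Real.one_le_rpow hL (by positivity)
    linarith
  have hkδ1 : 1 ≤ (k : ℝ) ^ δ := Real.one_le_rpow hk1 hδ0.le
  have hm : (k : ℝ) ^ δ ≤ ((k / t : ℕ) : ℝ) := by
    have h := Nat.lt_floor_add_one ((k : ℝ) / t)
    rw [Nat.floor_div_eq_div] at h
    linarith
  have hfin : (n : ℝ) ≤ (((k / t) ^ t : ℕ) : ℝ) := by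
    push_cast
    calc (n : ℝ) = Real.exp L := (Real.exp_log (by exact_mod_cast hn)).symm
      _ ≤ Real.exp (K * δ * t) := by
          apply Real.exp_le_exp.mpr
          have h3 : C * L / 2 ≤ K * t := by
            have : K * (C * L / K / 2) ≤ K * t := by gcongr
            have e : K * (C * L / K / 2) = C * L / 2 := by field_simp
            linarith
          have h4 : 2 ≤ δ * C := by
            rw [hδ, div_mul_eq_mul_div, le_div_iff₀ (by positivity)]
            linarith
          have h5 : δ * (C * L / 2) ≤ δ * (K * t) := by gcongr
          nlinarith
      _ = ((k : ℝ) ^ δ) ^ t := by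
          rw [Real.rpow_def_of_pos hk0, ← Real.exp_nat_mul]
          congr 1
          ring
      _ ≤ _ := by gcongr
  exact_mod_cast hfin

/-! ### Growth of spheres -/

/-- Growth: for every `ε > 0` there exists `C > 0` such that, for every `η > 0` and all large
enough `n`, for every finite group `G` acting transitively on a finite set `Ω` of size `n`,
every `k ≥ (log n)^(1+ε)` and every `ω ∈ Ω`, the sphere of radius `⌊C·(log n)/(log k)⌋` around
`ω` has at least `n / k^(ε/2)` points with probability at least `1 − η`. -/
theorem random_schreier_sphere_growth :
    ∀ ε : ℝ, 0 < ε → ∃ C : ℝ, 0 < C ∧ ∀ η : ℝ, 0 < η → ∃ N : ℕ,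
      ∀ (G Ω : Type) [Group G] [Fintype G] [MulAction G Ω] [Fintype Ω],
        MulAction.IsPretransitive G Ω → N ≤ Fintype.card Ω →
        ∀ k : ℕ, (Real.log (Fintype.card Ω)) ^ ((1 : ℝ) + ε) ≤ (k : ℝ) →
        ∀ ω : Ω,
        1 - η ≤ tupleProp G (fun A : Fin k → G =>
          (Fintype.card Ω : ℝ) / (k : ℝ) ^ (ε / 2) ≤
            ((sphereSet A ω ⌊C * Real.log (Fintype.card Ω) / Real.log k⌋₊).ncard : ℝ)) := by
  intro ε hε
  refine ⟨(6 + 2 * ε) / ε, by positivity, fun η hη => ?_⟩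
  set C := (6 + 2 * ε) / ε with hC
  -- The three lower bounds on `log n` give `1 ≤ log n`, `2 * C ≤ log k` and `2 / η ≤ k ^ (ε / 2)`.
  refine ⟨⌈Real.exp (max 1 (max (Real.exp (2 * C)) ((2 / η) ^ (2 / ε))))⌉₊, ?_⟩
  intro G Ω _ _ _ _ hT hN k hk ω
  have hne : Nonempty Ω := ⟨ω⟩
  have hn0 : 0 < Fintype.card Ω := Fintype.card_pos
  have hLbig : max 1 (max (Real.exp (2 * C)) ((2 / η) ^ (2 / ε))) ≤ Real.log (Fintype.card Ω) := by
    rw [Real.le_log_iff_exp_le (by exact_mod_cast hn0)]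
    exact Nat.ceil_le.mp hN
  simp only [max_le_iff] at hLbig
  obtain ⟨hL1, hL2, hL3⟩ := hLbig
  have hLk : Real.log (Fintype.card Ω) ≤ k := by
    refine le_trans ?_ hk
    conv_lhs => rw [← Real.rpow_one (Real.log (Fintype.card Ω))]
    exact Real.rpow_le_rpow_of_exponent_le hL1 (by linarith)
  have hk0 : (0 : ℝ) < k := by linarith
  have hlogk : 2 * C ≤ Real.log k := by
    rw [Real.le_log_iff_exp_le hk0]
    linarith
  have hκ0 : (0 : ℝ) < (k : ℝ) ^ (ε / 2) := by positivity
  have hκη : 2 / η ≤ (k : ℝ) ^ (ε / 2) := by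
    have h := Real.rpow_le_rpow (by positivity) (hL3.trans hLk) (by positivity : 0 ≤ ε / 2)
    have e : 2 / ε * (ε / 2) = 1 := by field_simp
    rwa [← Real.rpow_mul (by positivity), e, Real.rpow_one] at h
  set t := ⌊C * Real.log (Fintype.card Ω) / Real.log k⌋₊ with ht
  have hGpos : (0 : ℝ) < (Fintype.card G : ℝ) ^ k := by
    have : 0 < Fintype.card G := Fintype.card_pos
    positivity
  have hbad : (Nat.card {A : Fin k → G // ¬ (Fintype.card Ω : ℝ) / (k : ℝ) ^ (ε / 2)
      ≤ ((sphereSet A ω t).ncard : ℝ)} : ℝ) * (k : ℝ) ^ (ε / 2)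
      ≤ 2 * (Fintype.card G : ℝ) ^ k := by
    by_cases hcase : ε / 2 * Real.log k ≤ Real.log (Fintype.card Ω)
    · exact bad_card_le hT ω t (k / t) (Nat.mul_div_le k t)
        (growth_numerics ε hε _ k hn0 hL1 hk hlogk hcase) _ hκ0
    · -- Here `n ≤ k ^ (ε / 2)`, and a nonempty sphere is never too small.
      have hle : (Fintype.card Ω : ℝ) / (k : ℝ) ^ (ε / 2) ≤ 1 := by
        rw [div_le_one hκ0]
        push Not at hcase
        rw [← Real.log_rpow hk0] at hcase
        exact ((Real.log_lt_log_iff (by exact_mod_cast hn0) hκ0).mp hcase).le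
      have hempty : IsEmpty {A : Fin k → G // ¬ (Fintype.card Ω : ℝ) / (k : ℝ) ^ (ε / 2)
          ≤ ((sphereSet A ω t).ncard : ℝ)} := by
        refine ⟨fun ⟨A, hA⟩ => hA (hle.trans ?_)⟩
        have hkn : 0 < k := by exact_mod_cast hk0
        have : (sphereSet A ω t).Nonempty := ⟨_, fun _ => ⟨0, hkn⟩, rfl⟩
        have := (Set.ncard_pos (Set.toFinite _)).mpr this
        exact_mod_cast this
      rw [Nat.card_of_isEmpty, Nat.cast_zero, zero_mul]
      linarith
  have hcompl : (Nat.card {A : Fin k → G // (Fintype.card Ω : ℝ) / (k : ℝ) ^ (ε / 2)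
      ≤ ((sphereSet A ω t).ncard : ℝ)} : ℝ)
      + (Nat.card {A : Fin k → G // ¬ (Fintype.card Ω : ℝ) / (k : ℝ) ^ (ε / 2)
      ≤ ((sphereSet A ω t).ncard : ℝ)} : ℝ) = (Fintype.card G : ℝ) ^ k := by
    classical
    rw [Nat.card_eq_fintype_card, Nat.card_eq_fintype_card]
    have := Fintype.card_subtype_compl (fun A : Fin k → G =>
      (Fintype.card Ω : ℝ) / (k : ℝ) ^ (ε / 2) ≤ ((sphereSet A ω t).ncard : ℝ))
    have h2 := Fintype.card_subtype_le (fun A : Fin k → G =>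
      (Fintype.card Ω : ℝ) / (k : ℝ) ^ (ε / 2) ≤ ((sphereSet A ω t).ncard : ℝ))
    rw [this, Nat.cast_sub h2]
    simp
  unfold tupleProp
  rw [le_div_iff₀ hGpos]
  have hηκ : 2 ≤ η * (k : ℝ) ^ (ε / 2) := by
    rw [div_le_iff₀ hη] at hκη
    linarith
  have hb : (Nat.card {A : Fin k → G // ¬ (Fintype.card Ω : ℝ) / (k : ℝ) ^ (ε / 2)
      ≤ ((sphereSet A ω t).ncard : ℝ)} : ℝ) ≤ η * (Fintype.card G : ℝ) ^ k := by
    apply le_of_mul_le_mul_right _ hκ0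
    nlinarith [mul_le_mul_of_nonneg_right hηκ hGpos.le]
  linarith
end

section
/- Let δ > 0, let G be a finite group acting transitively on a finite set Ω with |Ω| = n ≥ 2, let ω ∈ Ω, let t, k ≥ 1 be integers, and let η ∈ [0,1]. Suppose that the proportion of tuples A ∈ G^k with |S_A(ω, t)| ≥ n / k^δ is at least 1 − η. Set K = 2k + 2⌈4·k^δ·log n⌉. Then the proportion of tuples B ∈ G^K for which the diameter of the Schreier graph Sch(G↷Ω, B) is at most 2t + 2 is at least 1 − 2η − 2/n. -/
/-! The `K = 2k + 2m` entries of a random tuple, with `m = ⌈4 k^δ log n⌉`, are split into four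
independent blocks `A₁, C₁, A₂, C₂` of sizes `k, m, k, m`. With probability at least `1 - η` the
sphere `S` of radius `t` about `ω` for `A₁` has density at least `k^(-δ)` in `Ω`. Given this, for a
fixed `y` and uniform `g`, the point `g⁻¹ • y` is uniform in `Ω` (`card_inv_smul_mem`), so no entry
of `C₁` carries a point of `S` to `y` with probability at most
`(1 - k^(-δ))^m ≤ exp (-m k^(-δ)) ≤ n⁻²` (`card_forall_notMem_le`). A union bound over `y` shows
that every point is reached from `ω` in exactly `t + 1` steps, except with probability `η + 1/n`
(`card_not_coversFrom_le`). Inversion preserves the uniform distribution, so the same bound applied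
to `A₂⁻¹, C₂⁻¹` shows that every point reaches `ω` in `t + 1` steps, using `A₂, C₂`. If both events
happen, any two points are joined through `ω` by a word of length `2t + 2`. -/

open scoped ENNReal Pointwise

section Helpers

variable {G Ω : Type*} [Group G] [MulAction G Ω]

open Finset in
open Classical in
/-- For a transitive action and uniform `g`, the point `g⁻¹ • y` is uniformly distributed. -/
lemma card_inv_smul_mem [Fintype G] [Fintype Ω] [MulAction.IsPretransitive G Ω]
    (y : Ω) (S : Finset Ω) :
    #{g : G | g⁻¹ • y ∈ S} * Fintype.card Ω = #S * Fintype.card G := by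
  have hfib : ∀ z : Ω, #{g : G | g⁻¹ • y = z} = #{g : G | g⁻¹ • y = y} := by
    intro z
    obtain ⟨h, rfl⟩ := MulAction.exists_smul_eq G y z
    refine Finset.card_bij' (fun g _ => g * h) (fun g _ => g * h⁻¹) ?_ ?_ ?_ ?_
    · intro g hg
      simp only [mem_filter, mem_univ, true_and] at hg ⊢
      rw [mul_inv_rev, mul_smul, hg, inv_smul_smul]
    · intro g hg
      simp only [mem_filter, mem_univ, true_and] at hg ⊢
      rw [mul_inv_rev, mul_smul, hg, inv_inv]
    · simp
    · simp
  have hsum : ∀ T : Finset Ω, #{g : G | g⁻¹ • y ∈ T} = #T * #{g : G | g⁻¹ • y = y} := by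
    intro T
    rw [Finset.card_eq_sum_card_fiberwise (f := fun g : G => g⁻¹ • y) (t := T)
      (fun g hg => by simpa using hg), ← smul_eq_mul, ← Finset.sum_const]
    refine Finset.sum_congr rfl fun z hz => ?_
    rw [← hfib z, Finset.filter_filter]
    congr 1
    ext g
    simp only [mem_filter, mem_univ, true_and]
    exact ⟨fun h => h.2, fun h => ⟨h ▸ hz, h⟩⟩
  have huniv := hsum univ
  simp only [mem_univ, filter_true, card_univ] at huniv
  rw [hsum S, huniv]
  ring

open Finset in
open Classical in
/-- If `S` has density at least `1 / c`, the proportion of `m`-tuples none of whose entries carries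
a point of `S` to `y` is at most `(1 - 1 / c) ^ m ≤ exp (-m / c) ≤ n⁻²`. -/
lemma card_forall_notMem_le [Fintype G] [Fintype Ω] [MulAction.IsPretransitive G Ω]
    (y : Ω) (S : Finset Ω) (c : ℝ) (hc : 0 < c) (hS : (Fintype.card Ω : ℝ) / c ≤ #S) (m : ℕ)
    (hm : 2 * c * Real.log (Fintype.card Ω) ≤ m) :
    (#{C : Fin m → G | ∀ j, (C j)⁻¹ • y ∉ S} : ℝ) ≤
      (Fintype.card G : ℝ) ^ m / (Fintype.card Ω : ℝ) ^ 2 := by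
  have hn : (0 : ℝ) < Fintype.card Ω := by exact_mod_cast Fintype.card_pos_iff.2 ⟨y⟩
  have hG : (0 : ℝ) < Fintype.card G := by exact_mod_cast Fintype.card_pos
  have hpi : #{C : Fin m → G | ∀ j, (C j)⁻¹ • y ∉ S} = #{g : G | g⁻¹ • y ∉ S} ^ m := by
    rw [← Fintype.card_fin m, ← Finset.card_univ (α := Fin m), ← Finset.prod_const,
      Finset.card_univ, Fintype.card_fin, ← Fintype.card_piFinset]
    congr 1
    ext C
    simp
  have hin : (#{g : G | g⁻¹ • y ∈ S} : ℝ) * Fintype.card Ω = #S * Fintype.card G := by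
    exact_mod_cast card_inv_smul_mem (G := G) y S
  have hcompl : (#{g : G | g⁻¹ • y ∈ S} : ℝ) + #{g : G | g⁻¹ • y ∉ S} = Fintype.card G := by
    exact_mod_cast Finset.card_filter_add_card_filter_not (s := (univ : Finset G)) _
  have hlow : (Fintype.card G : ℝ) * (1 / c) ≤ #{g : G | g⁻¹ • y ∈ S} := by
    refine le_of_mul_le_mul_right ?_ hn
    rw [hin]
    calc (Fintype.card G : ℝ) * (1 / c) * Fintype.card Ω
        = (Fintype.card Ω / c) * Fintype.card G := by ring
      _ ≤ _ := by gcongr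
  have hup : (#{g : G | g⁻¹ • y ∉ S} : ℝ) ≤ Fintype.card G * Real.exp (-(1 / c)) := by
    have := Real.add_one_le_exp (-(1 / c))
    nlinarith
  have hexp : Real.exp (-(1 / c)) ^ m ≤ 1 / (Fintype.card Ω : ℝ) ^ 2 := by
    have h2 : (2 : ℝ) * Real.log (Fintype.card Ω) ≤ m * (1 / c) := by
      rw [mul_one_div, le_div_iff₀ hc]
      linarith
    rw [← Real.exp_nat_mul, le_div_iff₀ (by positivity)]
    have h3 : (Fintype.card Ω : ℝ) ^ 2 = Real.exp (2 * Real.log (Fintype.card Ω)) := by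
      rw [two_mul, Real.exp_add, Real.exp_log hn, sq]
    rw [h3, ← Real.exp_add, Real.exp_le_one_iff]
    linarith
  rw [hpi]
  push_cast
  calc (#{g : G | g⁻¹ • y ∉ S} : ℝ) ^ m ≤ (Fintype.card G * Real.exp (-(1 / c))) ^ m := by gcongr
    _ = (Fintype.card G : ℝ) ^ m * Real.exp (-(1 / c)) ^ m := mul_pow _ _ _
    _ ≤ (Fintype.card G : ℝ) ^ m * (1 / (Fintype.card Ω : ℝ) ^ 2) := by gcongr
    _ = _ := by ring

/-- Every point of `Ω` is obtained from `ω` by applying a product of exactly `t` entries of the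
first tuple and then one entry of the second tuple. -/
def CoversFrom {k m : ℕ} (ω : Ω) (t : ℕ) (P : (Fin k → G) × (Fin m → G)) : Prop :=
  ∀ y : Ω, ∃ j : Fin m, (P.2 j)⁻¹ • y ∈ sphereSet P.1 ω t

lemma tupleProp_eq_one_sub [Fintype G] {k : ℕ} (P : (Fin k → G) → Prop) :
    tupleProp G P = 1 - (Nat.card {A : Fin k → G // ¬ P A} : ℝ) / (Fintype.card G : ℝ) ^ k := by
  classical
  have hG : (0 : ℝ) < Fintype.card G := by exact_mod_cast Fintype.card_pos
  have h : (Nat.card {A : Fin k → G // P A} : ℝ) + Nat.card {A : Fin k → G // ¬ P A}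
      = (Fintype.card G : ℝ) ^ k := by
    rw [Nat.card_eq_fintype_card, Nat.card_eq_fintype_card, Fintype.card_subtype,
      Fintype.card_subtype]
    have := Finset.card_filter_add_card_filter_not (s := (Finset.univ : Finset (Fin k → G))) P
    rw [Finset.card_univ, Fintype.card_fun, Fintype.card_fin] at this
    exact_mod_cast this
  rw [tupleProp, eq_sub_iff_add_eq, ← add_div, h, div_self (by positivity)]

open Finset in
open Classical in
/-- The failure probability of `CoversFrom`: `η` for a small sphere, plus `n · n⁻²` from the union
bound over the target point. -/
lemma card_not_coversFrom_le [Fintype G] [Fintype Ω] [MulAction.IsPretransitive G Ω]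
    (ω : Ω) (t k m : ℕ) (c η : ℝ) (hc : 0 < c)
    (h : 1 - η ≤ tupleProp G (fun A : Fin k → G =>
      (Fintype.card Ω : ℝ) / c ≤ ((sphereSet A ω t).ncard : ℝ)))
    (hm : 2 * c * Real.log (Fintype.card Ω) ≤ m) :
    (#{P : (Fin k → G) × (Fin m → G) | ¬ CoversFrom ω t P} : ℝ) ≤
      (η + 1 / Fintype.card Ω) * (Fintype.card G : ℝ) ^ (k + m) := by
  have hn : (0 : ℝ) < Fintype.card Ω := by exact_mod_cast Fintype.card_pos_iff.2 ⟨ω⟩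
  have hG : (0 : ℝ) < Fintype.card G := by exact_mod_cast Fintype.card_pos
  set L : (Fin k → G) → Prop := fun A =>
    (Fintype.card Ω : ℝ) / c ≤ ((sphereSet A ω t).ncard : ℝ) with hL
  have hsmall : (#{A : Fin k → G | ¬ L A} : ℝ) ≤ η * (Fintype.card G : ℝ) ^ k := by
    rw [tupleProp_eq_one_sub, Nat.card_eq_fintype_card, Fintype.card_subtype] at h
    rw [← div_le_iff₀ (by positivity)]
    linarith
  have hrow : ∀ A : Fin k → G, (#{C : Fin m → G | ¬ CoversFrom ω t (A, C)} : ℝ) ≤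
      (if ¬ L A then 1 else 0) * (Fintype.card G : ℝ) ^ m
        + (Fintype.card G : ℝ) ^ m / Fintype.card Ω := by
    intro A
    by_cases hA : L A
    · simp only [hA, not_true_eq_false, if_false, zero_mul, zero_add]
      have hsub : ({C : Fin m → G | ¬ CoversFrom ω t (A, C)} : Finset (Fin m → G)) ⊆
          univ.biUnion fun y : Ω =>
            {C : Fin m → G | ∀ j, (C j)⁻¹ • y ∉ (sphereSet A ω t).toFinset} := by
        intro C hC
        simpa [CoversFrom] using hC
      calc (#{C : Fin m → G | ¬ CoversFrom ω t (A, C)} : ℝ)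
          ≤ ∑ y : Ω, (#{C : Fin m → G | ∀ j, (C j)⁻¹ • y ∉ (sphereSet A ω t).toFinset} : ℝ) := by
            exact_mod_cast (card_le_card hsub).trans card_biUnion_le
        _ ≤ ∑ y : Ω, (Fintype.card G : ℝ) ^ m / (Fintype.card Ω : ℝ) ^ 2 := by
            refine sum_le_sum fun y _ => card_forall_notMem_le y _ c hc ?_ m hm
            rw [← Set.ncard_eq_toFinset_card']
            exact hA
        _ = (Fintype.card G : ℝ) ^ m / Fintype.card Ω := by
            rw [sum_const, card_univ, nsmul_eq_mul]
            field_simp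
    · simp only [hA, not_false_eq_true, if_true, one_mul]
      have h1 : (#{C : Fin m → G | ¬ CoversFrom ω t (A, C)} : ℝ) ≤ (Fintype.card G : ℝ) ^ m := by
        have := card_le_univ ({C : Fin m → G | ¬ CoversFrom ω t (A, C)} : Finset (Fin m → G))
        rw [Fintype.card_fun, Fintype.card_fin] at this
        exact_mod_cast this
      have : 0 ≤ (Fintype.card G : ℝ) ^ m / Fintype.card Ω := by positivity
      linarith
  have hsplit : #{P : (Fin k → G) × (Fin m → G) | ¬ CoversFrom ω t P}
      = ∑ A : Fin k → G, #{C : Fin m → G | ¬ CoversFrom ω t (A, C)} := by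
    simp only [card_filter, Fintype.sum_prod_type]
  rw [hsplit]
  push_cast
  refine (sum_le_sum fun A _ => hrow A).trans ?_
  rw [sum_add_distrib, ← sum_mul, sum_boole, sum_const, card_univ, Fintype.card_fun,
    Fintype.card_fin, nsmul_eq_mul, add_mul, pow_add]
  push_cast
  refine add_le_add ?_ (le_of_eq (by ring))
  rw [← mul_assoc]
  gcongr

/-- A diameter bound from words given as lists of indices instead of functions on `Fin D`. -/
lemma schreierDiam_le_of_list {K : ℕ} (B : Fin K → G) (D : ℕ)
    (h : ∀ x y : Ω, ∃ l : List (Fin K), l.length = D ∧ (l.map B).prod • x = y) :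
    schreierDiam G Ω B ≤ (D : ℕ∞) := by
  refine sInf_le ⟨D, rfl, fun x y => ?_⟩
  obtain ⟨l, rfl, hl⟩ := h x y
  refine ⟨l.length, le_rfl, l.get, ?_⟩
  rwa [← List.map_ofFn, List.ofFn_get]

lemma exists_list_of_mem_sphereSet {k t : ℕ} {A : Fin k → G} {ω x : Ω}
    (h : x ∈ sphereSet A ω t) :
    ∃ l : List (Fin k), l.length = t ∧ (l.map A).prod • ω = x := by
  obtain ⟨f, hf⟩ := h
  exact ⟨List.ofFn f, by simp, by rwa [List.map_ofFn]⟩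

/-- Joining `x` to `y` through `ω`: the word from `x` to `ω` is the inverse of a word from `ω` to
`x` in the inverted entries `Q⁻¹`. -/
lemma schreierDiam_le_of_coversFrom {k m K t : ℕ} (ω : Ω) (B : Fin K → G)
    (e : (Fin k ⊕ Fin m) ⊕ (Fin k ⊕ Fin m) → Fin K)
    (h₁ : CoversFrom ω t (fun i => B (e (.inl (.inl i))), fun j => B (e (.inl (.inr j)))))
    (h₂ : CoversFrom ω t
      (fun i => B (e (.inr (.inl i))), fun j => B (e (.inr (.inr j))))⁻¹) :
    schreierDiam G Ω B ≤ ((2 * t + 2 : ℕ) : ℕ∞) := by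
  refine schreierDiam_le_of_list B _ fun x y => ?_
  obtain ⟨j, hj⟩ := h₁ y
  obtain ⟨j', hj'⟩ := h₂ x
  obtain ⟨l, hl, hly⟩ := exists_list_of_mem_sphereSet hj
  obtain ⟨l', hl', hlx⟩ := exists_list_of_mem_sphereSet hj'
  refine ⟨e (.inl (.inr j)) :: (l.map (fun i => e (.inl (.inl i))) ++
    (l'.map (fun i => e (.inr (.inl i)))).reverse ++ [e (.inr (.inr j'))]), ?_, ?_⟩
  · simp [hl, hl']
    ring
  · have hinv : ((l'.map (fun i => e (.inr (.inl i)))).reverse.map B).prod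
        = (l'.map (fun i => B (e (.inr (.inl i))))⁻¹).prod⁻¹ := by
      rw [List.prod_inv_reverse, List.map_reverse]
      simp [Function.comp_def]
    have hx : B (e (.inr (.inr j'))) • x
        = (l'.map (fun i => B (e (.inr (.inl i))))⁻¹).prod • ω := by
      simpa using hlx.symm
    have hy : (l.map (fun i => B (e (.inl (.inl i))))).prod • ω = (B (e (.inl (.inr j))))⁻¹ • y :=
      hly
    rw [List.map_cons, List.prod_cons, List.map_append, List.prod_append, List.map_append,
      List.prod_append, hinv]
    simp only [List.map_cons, List.map_nil, List.prod_cons, List.prod_nil, mul_one, mul_smul]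
    rw [hx, inv_smul_smul, List.map_map]
    change _ • (l.map (fun i => B (e (.inl (.inl i))))).prod • ω = y
    rw [hy, smul_inv_smul]

end Helpers

/-- Diameter bound: if with probability at least `1 − η` the sphere `S_A(ω, t)` has at least
`n / k^δ` points for `A ∈ G^k`, then with probability at least `1 − 2η − 2/n` a tuple
`B ∈ G^K`, with `K = 2k + 2⌈4·k^δ·log n⌉`, gives a Schreier graph of diameter at most
`2t + 2`. -/
theorem diameter_bound_of_large_sphere {G Ω : Type*} [Group G] [Fintype G]
    [MulAction G Ω] [Fintype Ω]
    (htrans : MulAction.IsPretransitive G Ω)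
    (δ : ℝ) (hδ : 0 < δ) (hn : 2 ≤ Fintype.card Ω)
    (ω : Ω) (t k : ℕ) (ht : 1 ≤ t) (hk : 1 ≤ k)
    (η : ℝ) (hη : η ∈ Set.Icc (0 : ℝ) 1)
    (h : 1 - η ≤ tupleProp G (fun A : Fin k → G =>
      (Fintype.card Ω : ℝ) / (k : ℝ) ^ δ ≤ ((sphereSet A ω t).ncard : ℝ)))
    (K : ℕ) (hK : K = 2 * k + 2 * ⌈4 * (k : ℝ) ^ δ * Real.log (Fintype.card Ω)⌉₊) :
    1 - 2 * η - 2 / (Fintype.card Ω : ℝ) ≤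
      tupleProp G (fun B : Fin K → G =>
        schreierDiam G Ω B ≤ ((2 * t + 2 : ℕ) : ℕ∞)) := by
  classical
  set n : ℝ := (Fintype.card Ω : ℝ) with hn_def
  set m : ℕ := ⌈4 * (k : ℝ) ^ δ * Real.log n⌉₊ with hm_def
  have hc : (0 : ℝ) < (k : ℝ) ^ δ := Real.rpow_pos_of_pos (by exact_mod_cast hk) δ
  have hn1 : (1 : ℝ) ≤ n := by
    have : (2 : ℝ) ≤ n := by rw [hn_def]; exact_mod_cast hn
    linarith
  have hG : (0 : ℝ) < Fintype.card G := by exact_mod_cast Fintype.card_pos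
  have hm : 2 * (k : ℝ) ^ δ * Real.log n ≤ m := by
    have h1 : 4 * (k : ℝ) ^ δ * Real.log n ≤ m := Nat.le_ceil _
    have h2 : 0 ≤ (k : ℝ) ^ δ * Real.log n := mul_nonneg hc.le (Real.log_nonneg hn1)
    linarith
  have hbad := card_not_coversFrom_le ω t k m _ η hc h hm
  set bad : Finset ((Fin k → G) × (Fin m → G)) := {P | ¬ CoversFrom ω t P} with hbad_def
  let e : (Fin k ⊕ Fin m) ⊕ (Fin k ⊕ Fin m) ≃ Fin K :=
    Fintype.equivFinOfCardEq (by simp; omega)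
  let φ : (Fin K → G) ≃
      ((Fin k → G) × (Fin m → G)) × ((Fin k → G) × (Fin m → G)) :=
    (e.symm.arrowCongr (Equiv.refl G)).trans ((Equiv.sumArrowEquivProdArrow _ _ _).trans
      ((Equiv.sumArrowEquivProdArrow _ _ _).prodCongr (Equiv.sumArrowEquivProdArrow _ _ _)))
  have hsub : ({B : Fin K → G | ¬ schreierDiam G Ω B ≤ ((2 * t + 2 : ℕ) : ℕ∞)} : Finset _).map
      φ.toEmbedding ⊆ bad ×ˢ Finset.univ ∪ Finset.univ ×ˢ bad⁻¹ := by
    intro P hP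
    obtain ⟨B, hB, rfl⟩ := Finset.mem_map.1 hP
    by_contra hcon
    simp only [Finset.mem_union, Finset.mem_product, Finset.mem_univ, and_true, true_and,
      Finset.mem_inv', hbad_def, Finset.mem_filter, not_or, not_not] at hcon
    exact (Finset.mem_filter.1 hB).2 (schreierDiam_le_of_coversFrom ω B e hcon.1 hcon.2)
  have hcard : (Finset.card
        {B : Fin K → G | ¬ schreierDiam G Ω B ≤ ((2 * t + 2 : ℕ) : ℕ∞)} : ℝ) ≤
      2 * (bad.card * (Fintype.card G : ℝ) ^ (k + m)) := by
    have := (Finset.card_le_card hsub).trans (Finset.card_union_le _ _)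
    simp only [Finset.card_map, Finset.card_product, Finset.card_inv, Finset.card_univ,
      Fintype.card_prod, Fintype.card_fun, Fintype.card_fin, ← pow_add] at this
    refine ((Nat.cast_le (α := ℝ)).2 this).trans (le_of_eq ?_)
    push_cast
    ring
  have hpow : (Fintype.card G : ℝ) ^ K
      = (Fintype.card G : ℝ) ^ (k + m) * (Fintype.card G : ℝ) ^ (k + m) := by
    rw [← pow_add, hK]
    congr 1
    omega
  rw [tupleProp_eq_one_sub, Nat.card_eq_fintype_card, Fintype.card_subtype]
  have hfin : (Finset.card
        {B : Fin K → G | ¬ schreierDiam G Ω B ≤ ((2 * t + 2 : ℕ) : ℕ∞)} : ℝ)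
      / (Fintype.card G : ℝ) ^ K ≤ 2 * (η + 1 / n) := by
    rw [div_le_iff₀ (by positivity), hpow]
    refine hcard.trans ?_
    calc 2 * (bad.card * (Fintype.card G : ℝ) ^ (k + m))
        ≤ 2 * (((η + 1 / n) * (Fintype.card G : ℝ) ^ (k + m))
            * (Fintype.card G : ℝ) ^ (k + m)) := by gcongr
      _ = _ := by ring
  have : 2 * (η + 1 / n) = 2 * η + 2 / n := by ring
  linarith
end

section
/- Let G be a finite group acting transitively on a finite set Ω, let r, s > 0 be real numbers, and let X, Y ⊆ Ω. Suppose that the number of elements g ∈ G with |X^g ∩ Y| ≥ r is at least |G|/s. Then |Ω| ≤ |X|·|Y|·s / r. -/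
/-!
The proof double counts the triples `(g, x, y)` with `x ∈ X`, `y ∈ Y` and `g • x = y`. By
transitivity each pair `(x, y)` is hit by exactly `|G| / |Ω|` group elements
(`card_transporter_mul`), so `∑ g, |g • X ∩ Y| = |G| |X| |Y| / |Ω|` (`sum_ncard_smul_inter`).
On the other hand, by Markov's inequality the sum is at least `r` times the number of `g` with
`|g • X ∩ Y| ≥ r`, hence at least `r |G| / s`. Cancelling `|G|` gives the bound.
-/

open scoped ENNReal Pointwise

open Classical in
/-- The sets `{g | g • x = y}`, for fixed `x`, partition `G` as `y` varies, and they are left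
translates of one another, so each has `|G| / |Ω|` elements. -/
lemma card_transporter_mul {G Ω : Type*} [Group G] [Fintype G] [MulAction G Ω] [Fintype Ω]
    [MulAction.IsPretransitive G Ω] (x y : Ω) :
    (Finset.univ.filter fun g : G => g • x = y).card * Fintype.card Ω = Fintype.card G := by
  have heq : ∀ z : Ω, (Finset.univ.filter fun g : G => g • x = z).card =
      (Finset.univ.filter fun g : G => g • x = y).card := by
    intro z
    obtain ⟨k, hk⟩ := MulAction.exists_smul_eq G z y
    refine Finset.card_equiv (Equiv.mulLeft k) fun g => ?_
    simp [mul_smul, ← hk]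
  have hsum := Finset.card_eq_sum_card_fiberwise (s := (Finset.univ : Finset G))
    (t := (Finset.univ : Finset Ω)) (f := fun g => g • x) (fun _ _ => by simp)
  rw [Finset.sum_congr rfl fun z _ => heq z] at hsum
  simp only [Finset.sum_const, Finset.card_univ, smul_eq_mul] at hsum
  rw [hsum, mul_comm]

open Classical in
lemma ncard_smul_inter {G Ω : Type*} [Group G] [MulAction G Ω] [Fintype Ω] (X Y : Set Ω) (g : G) :
    ((g • X) ∩ Y).ncard =
      ∑ x ∈ X.toFinset, ∑ y ∈ Y.toFinset, if g • x = y then 1 else 0 := by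
  have himage : (g • X) ∩ Y = (fun x => g • x) '' {x | x ∈ X ∧ g • x ∈ Y} := by
    ext y
    simp only [Set.mem_inter_iff, Set.mem_smul_set, Set.mem_image, Set.mem_ofPred_eq]
    constructor
    · rintro ⟨⟨x, hx, rfl⟩, hy⟩
      exact ⟨x, ⟨hx, hy⟩, rfl⟩
    · rintro ⟨x, ⟨hx, hy⟩, rfl⟩
      exact ⟨⟨x, hx, rfl⟩, hy⟩
  rw [himage, Set.ncard_image_of_injective _ (MulAction.injective g), Set.ncard_eq_toFinset_card']
  simp only [Finset.sum_ite_eq, Set.mem_toFinset]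
  rw [← Finset.card_filter]
  congr 1
  ext x
  simp

lemma sum_ncard_smul_inter {G Ω : Type*} [Group G] [Fintype G] [MulAction G Ω] [Fintype Ω]
    [MulAction.IsPretransitive G Ω] (X Y : Set Ω) :
    (∑ g : G, ((g • X) ∩ Y).ncard) * Fintype.card Ω =
      X.ncard * Y.ncard * Fintype.card G := by
  classical
  simp only [ncard_smul_inter]
  rw [Finset.sum_comm]
  simp_rw [Finset.sum_comm (s := (Finset.univ : Finset G)), ← Finset.card_filter, Finset.sum_mul,
    card_transporter_mul]
  simp [Set.ncard_eq_toFinset_card', mul_assoc]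

/-- If for at least `|G|/s` of the elements `g ∈ G` we have `|X^g ∩ Y| ≥ r`, then
`|Ω| ≤ |X|·|Y|·s / r`. -/
theorem card_le_of_many_large_intersections {G Ω : Type*} [Group G] [Fintype G]
    [MulAction G Ω] [Fintype Ω]
    (htrans : MulAction.IsPretransitive G Ω)
    (r s : ℝ) (hr : 0 < r) (hs : 0 < s) (X Y : Set Ω)
    (h : (Fintype.card G : ℝ) / s ≤ (Nat.card {g : G // r ≤ (((g • X) ∩ Y).ncard : ℝ)} : ℝ)) :
    (Fintype.card Ω : ℝ) ≤ (X.ncard : ℝ) * (Y.ncard : ℝ) * s / r := by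
  classical
  have hsum : (∑ g : G, (((g • X) ∩ Y).ncard : ℝ)) * Fintype.card Ω =
      X.ncard * Y.ncard * Fintype.card G := by
    exact_mod_cast sum_ncard_smul_inter (G := G) X Y
  have hmarkov : (Nat.card {g : G // r ≤ (((g • X) ∩ Y).ncard : ℝ)} : ℝ) * r ≤
      ∑ g : G, (((g • X) ∩ Y).ncard : ℝ) := by
    rw [Nat.card_eq_fintype_card, Fintype.card_subtype, ← nsmul_eq_mul]
    exact (Finset.card_nsmul_le_sum _ _ r fun g hg => (Finset.mem_filter.1 hg).2).trans
      (Finset.sum_le_sum_of_subset_of_nonneg (Finset.filter_subset _ _)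
        fun _ _ _ => Nat.cast_nonneg _)
  have hG : (0 : ℝ) < Fintype.card G := by exact_mod_cast Fintype.card_pos
  have hle : (Fintype.card G : ℝ) / s * r * Fintype.card Ω ≤
      X.ncard * Y.ncard * Fintype.card G := by
    rw [← hsum]
    gcongr
    exact (mul_le_mul_of_nonneg_right h hr.le).trans hmarkov
  rw [le_div_iff₀ hr]
  refine le_of_mul_le_mul_left ?_ hG
  calc (Fintype.card G : ℝ) * (Fintype.card Ω * r)
      = (Fintype.card G : ℝ) / s * r * Fintype.card Ω * s := by field_simp
    _ ≤ X.ncard * Y.ncard * Fintype.card G * s := by gcongr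
    _ = Fintype.card G * (X.ncard * Y.ncard * s) := by ring
end

section
/- Let d ≥ 2 be a real number, let G be a finite group acting transitively on a finite set Ω, let X ⊆ Ω, and let k ≥ 4 be an integer such that |X| ≤ |Ω| / k^d. Then the proportion of tuples A = (g₁,…,g_k) ∈ G^k for which |X^A| ≥ √k · |X| is at least (1 − 2/k^(d−1))^k. -/
/-!
Reveal the entries of `A` one at a time, and let `Y` be the union of the translates of `X` revealed
so far, so that `|Y| ≤ k|X|`. By transitivity, each `g • x` is uniform on `Ω` for uniform `g`
(`card_transporter`), so a fresh translate satisfies `E |gX ∩ Y| = |X||Y|/|Ω| ≤ |X|/k^(d-1)`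
(`sum_ncard_inter`). By Markov's inequality, with probability at least `1 - 2/k^(d-1)` at least half
of `gX` lies outside `Y` (`card_good_step`). If this happens in all `k` steps, which by
`pow_le_card_of_step` has probability at least `(1 - 2/k^(d-1))^k`, then
`|X^A| ≥ (k/2)|X| ≥ √k|X|`, as `k ≥ 4`.
-/

open scoped ENNReal Pointwise

open Classical in
/-- In a transitive action, `g • x` is uniformly distributed on `Ω` when `g` is uniform on `G`. -/
lemma card_transporter {G Ω : Type*} [Group G] [Fintype G] [MulAction G Ω] [Fintype Ω]
    (htrans : MulAction.IsPretransitive G Ω) (x y : Ω) :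
    Fintype.card Ω * (Finset.univ.filter fun g : G => g • x = y).card = Fintype.card G := by
  have key : ∀ z : Ω, (Finset.univ.filter fun g : G => g • x = z).card
      = (Finset.univ.filter fun g : G => g • x = y).card := by
    intro z
    obtain ⟨h, rfl⟩ := htrans.exists_smul_eq y z
    refine Finset.card_equiv (Equiv.mulLeft h⁻¹) fun g => ?_
    simp [mul_smul, inv_smul_eq_iff]
  have hsum := Finset.card_eq_sum_card_fiberwise (s := (Finset.univ : Finset G))
    (t := (Finset.univ : Finset Ω)) (f := fun g => g • x) (by simp)
  rw [Finset.sum_congr rfl fun z _ => key z] at hsum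
  simpa using hsum.symm

/-- The average size of `gX ∩ Y` is `|X||Y|/|Ω|`. -/
lemma sum_ncard_inter {G Ω : Type*} [Group G] [Fintype G] [MulAction G Ω] [Fintype Ω]
    (htrans : MulAction.IsPretransitive G Ω) (X Y : Set Ω) :
    Fintype.card Ω * ∑ g : G, (g • X ∩ Y).ncard = Fintype.card G * (X.ncard * Y.ncard) := by
  classical
  have h1 : ∀ g : G, (g • X ∩ Y).ncard
      = ∑ x ∈ X.toFinset, ∑ y ∈ Y.toFinset, if g • x = y then 1 else 0 := by
    intro g
    have : g • X ∩ Y = (fun x => g • x) '' {x | x ∈ X ∧ g • x ∈ Y} := by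
      ext z
      simp only [Set.mem_inter_iff, Set.mem_smul_set, Set.mem_image, Set.mem_ofPred_eq]
      constructor
      · rintro ⟨⟨x, hx, rfl⟩, hz⟩
        exact ⟨x, ⟨hx, hz⟩, rfl⟩
      · rintro ⟨x, ⟨hx, hz⟩, rfl⟩
        exact ⟨⟨x, hx, rfl⟩, hz⟩
    rw [this, Set.ncard_image_of_injective _ (MulAction.injective g),
      Set.ncard_eq_toFinset_card']
    simp only [Finset.sum_ite_eq, Set.mem_toFinset]
    rw [← Finset.card_filter]
    congr 1
    ext z
    simp
  simp_rw [h1]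
  rw [Finset.sum_comm]
  simp_rw [Finset.sum_comm (s := (Finset.univ : Finset G)), ← Finset.card_filter, Finset.mul_sum,
    card_transporter htrans]
  simp [Set.ncard_eq_toFinset_card']
  ring

open Classical in
/-- If `|Y| ≤ k|X|`, then by Markov's inequality all but a proportion `2/k^(d-1)` of the elements
`g` move at least half of `X` outside `Y`. -/
lemma card_good_step {G Ω : Type*} [Group G] [Fintype G] [MulAction G Ω] [Fintype Ω]
    (htrans : MulAction.IsPretransitive G Ω) (d : ℝ) (X Y : Set Ω) (k : ℕ) (hk : 0 < k)
    (hX : (X.ncard : ℝ) ≤ (Fintype.card Ω : ℝ) / (k : ℝ) ^ d) (hY : Y.ncard ≤ k * X.ncard) :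
    (1 - 2 / (k : ℝ) ^ (d - 1)) * (Fintype.card G : ℝ) ≤
      ((Finset.univ.filter fun g : G => 2 * (g • X ∩ Y).ncard ≤ X.ncard).card : ℝ) := by
  set B := Finset.univ.filter fun g : G => ¬ 2 * (g • X ∩ Y).ncard ≤ X.ncard with hB
  have hk0 : (0 : ℝ) < k := by exact_mod_cast hk
  have hsplit : ((Finset.univ.filter fun g : G => 2 * (g • X ∩ Y).ncard ≤ X.ncard).card : ℝ)
      + B.card = Fintype.card G := by
    exact_mod_cast Finset.card_filter_add_card_filter_not (s := (Finset.univ : Finset G))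
      (fun g : G => 2 * (g • X ∩ Y).ncard ≤ X.ncard)
  suffices hBle : (B.card : ℝ) ≤ 2 / (k : ℝ) ^ (d - 1) * Fintype.card G by linarith
  rcases Nat.eq_zero_or_pos X.ncard with h0 | hpos
  · have : B = ∅ := by
      refine Finset.filter_eq_empty_iff.2 fun g _ => not_not.2 ?_
      have := Set.ncard_le_ncard (Set.inter_subset_left (s := g • X) (t := Y))
      rw [Set.ncard_smul_set] at this
      omega
    rw [this]
    simp only [Finset.card_empty, Nat.cast_zero]
    positivity
  have hx : (0 : ℝ) < X.ncard := by exact_mod_cast hpos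
  have hΩ : (0 : ℝ) < Fintype.card Ω := by
    have := (Set.ncard_pos (Set.toFinite X)).1 hpos
    have : Nonempty Ω := ⟨this.some⟩
    exact_mod_cast Fintype.card_pos
  have hmarkov : B.card * X.ncard ≤ 2 * ∑ g : G, (g • X ∩ Y).ncard := by
    calc B.card * X.ncard = ∑ _g ∈ B, X.ncard := by simp
      _ ≤ ∑ g ∈ B, 2 * (g • X ∩ Y).ncard :=
        Finset.sum_le_sum fun g hg => by
          have := (Finset.mem_filter.1 hg).2
          omega
      _ ≤ ∑ g : G, 2 * (g • X ∩ Y).ncard :=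
        Finset.sum_le_sum_of_subset (Finset.subset_univ _)
      _ = _ := by rw [Finset.mul_sum]
  have hmean := sum_ncard_inter htrans X Y
  have hmarkov' : (B.card : ℝ) * X.ncard ≤ 2 * ((∑ g : G, (g • X ∩ Y).ncard : ℕ) : ℝ) := by
    exact_mod_cast hmarkov
  have hmean' : (Fintype.card Ω : ℝ) * ((∑ g : G, (g • X ∩ Y).ncard : ℕ) : ℝ)
      = Fintype.card G * (X.ncard * Y.ncard) := by exact_mod_cast hmean
  have hY' : (Y.ncard : ℝ) ≤ k * X.ncard := by exact_mod_cast hY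
  rw [le_div_iff₀ (by positivity)] at hX
  have hpow : (k : ℝ) ^ d = k ^ (d - 1) * k := by
    rw [← Real.rpow_add_one hk0.ne', sub_add_cancel]
  have hq : (0 : ℝ) < (k : ℝ) ^ (d - 1) := by positivity
  have hYΩ : (Y.ncard : ℝ) * (k : ℝ) ^ (d - 1) ≤ Fintype.card Ω := by
    calc (Y.ncard : ℝ) * (k : ℝ) ^ (d - 1) ≤ k * X.ncard * (k : ℝ) ^ (d - 1) := by gcongr
      _ = X.ncard * (k : ℝ) ^ d := by rw [hpow]; ring
      _ ≤ _ := hX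
  rw [div_mul_eq_mul_div, le_div_iff₀ hq]
  refine le_of_mul_le_mul_left ?_ (mul_pos hΩ hx)
  calc (Fintype.card Ω : ℝ) * X.ncard * (B.card * (k : ℝ) ^ (d - 1))
      = Fintype.card Ω * (B.card * X.ncard) * (k : ℝ) ^ (d - 1) := by ring
    _ ≤ Fintype.card Ω * (2 * ((∑ g : G, (g • X ∩ Y).ncard : ℕ) : ℝ)) * (k : ℝ) ^ (d - 1) := by
      gcongr
    _ = 2 * Fintype.card G * X.ncard * (Y.ncard * (k : ℝ) ^ (d - 1)) := by
      linear_combination 2 * (k : ℝ) ^ (d - 1) * hmean'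
    _ ≤ 2 * Fintype.card G * X.ncard * Fintype.card Ω := by gcongr
    _ = _ := by ring

open Classical in
/-- If every tuple of length `n < k` satisfying `P` has at least `c` one-entry extensions
satisfying `P`, then at least `c ^ n` tuples of length `n ≤ k` satisfy `P`. -/
lemma pow_le_card_of_step {G : Type*} [Fintype G] (P : ∀ n : ℕ, (Fin n → G) → Prop) (k : ℕ)
    (c : ℝ) (hc : 0 ≤ c) (h0 : ∀ A, P 0 A)
    (hstep : ∀ n < k, ∀ A, P n A →
      c ≤ ((Finset.univ.filter fun g : G => P (n + 1) (Fin.cons g A)).card : ℝ)) :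
    ∀ n ≤ k, c ^ n ≤ ((Finset.univ.filter fun A : Fin n → G => P n A).card : ℝ) := by
  intro n
  induction n with
  | zero => intro _; simp [h0]
  | succ n ih =>
    intro hn
    set T := (Finset.univ.filter fun A : Fin n → G => P n A).sigma
      fun A => Finset.univ.filter fun g : G => P (n + 1) (Fin.cons g A) with hT
    have hle : T.card ≤ (Finset.univ.filter fun A : Fin (n + 1) → G => P (n + 1) A).card := by
      refine Finset.card_le_card_of_injOn (fun p => Fin.cons p.2 p.1) ?_ ?_
      · rintro ⟨A, g⟩ h
        simpa using (Finset.mem_filter.1 (Finset.mem_sigma.1 h).2).2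
      · rintro ⟨A, g⟩ _ ⟨A', g'⟩ _ h
        obtain ⟨rfl, rfl⟩ := Fin.cons_injective2 h
        rfl
    calc c ^ (n + 1) = c ^ n * c := pow_succ _ _
      _ ≤ (Finset.univ.filter fun A : Fin n → G => P n A).card * c := by
        gcongr
        exact ih (by omega)
      _ = ∑ A ∈ Finset.univ.filter fun A : Fin n → G => P n A, c := by simp
      _ ≤ ∑ A ∈ Finset.univ.filter fun A : Fin n → G => P n A,
          ((Finset.univ.filter fun g : G => P (n + 1) (Fin.cons g A)).card : ℝ) :=
        Finset.sum_le_sum fun A hA => hstep n (by omega) A (Finset.mem_filter.1 hA).2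
      _ = T.card := by rw [hT, Finset.card_sigma]; push_cast; rfl
      _ ≤ _ := by exact_mod_cast hle

/-- Explicit one-step growth: if `d ≥ 2`, `k ≥ 4` and `|X| ≤ |Ω|/k^d`, then the proportion of
tuples `A ∈ G^k` with `|X^A| ≥ √k·|X|` is at least `(1 − 2/k^(d−1))^k`. -/
theorem one_step_growth_explicit {G Ω : Type*} [Group G] [Fintype G]
    [MulAction G Ω] [Fintype Ω]
    (htrans : MulAction.IsPretransitive G Ω)
    (d : ℝ) (hd : 2 ≤ d) (X : Set Ω) (k : ℕ) (hk : 4 ≤ k)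
    (hX : (X.ncard : ℝ) ≤ (Fintype.card Ω : ℝ) / (k : ℝ) ^ d) :
    (1 - 2 / (k : ℝ) ^ (d - 1)) ^ k ≤ tupleProp G (fun A : Fin k → G =>
      Real.sqrt k * (X.ncard : ℝ) ≤ (((⋃ i, A i • X) : Set Ω).ncard : ℝ)) := by
  classical
  have hk4 : (4 : ℝ) ≤ k := by exact_mod_cast hk
  have hk0 : (0 : ℝ) < k := by linarith
  have hG : (0 : ℝ) < Fintype.card G := by exact_mod_cast Fintype.card_pos
  -- Nonnegativity of `1 - 2/k^(d-1)` uses `k^(d-1) ≥ k ≥ 2`.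
  have hq : (k : ℝ) ≤ (k : ℝ) ^ (d - 1) := by
    simpa using Real.rpow_le_rpow_of_exponent_le (x := (k : ℝ)) (y := 1) (z := d - 1)
      (by linarith) (by linarith)
  have hp : 0 ≤ 1 - 2 / (k : ℝ) ^ (d - 1) := by
    rw [sub_nonneg, div_le_one (by linarith)]
    linarith
  -- The upper bound in `P` is what bounds `|Y|` by `k|X|` in `card_good_step`.
  obtain ⟨P, hP⟩ : ∃ P : ∀ n : ℕ, (Fin n → G) → Prop, ∀ n A, P n A ↔
      n * X.ncard ≤ 2 * (⋃ i, A i • X).ncard ∧ (⋃ i, A i • X).ncard ≤ n * X.ncard :=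
    ⟨_, fun _ _ => Iff.rfl⟩
  have hcount := pow_le_card_of_step P k ((1 - 2 / (k : ℝ) ^ (d - 1)) * Fintype.card G)
    (by positivity) (by intro A; simp [hP]) (by
      intro n hn A hA
      obtain ⟨h1, h2⟩ := (hP n A).1 hA
      refine (card_good_step htrans d X (⋃ i, A i • X) k (by omega) hX
        (h2.trans (Nat.mul_le_mul_right _ hn.le))).trans ?_
      refine Nat.cast_le.2 (Finset.card_le_card fun g hg => ?_)
      have hg' := (Finset.mem_filter.1 hg).2
      refine Finset.mem_filter.2 ⟨Finset.mem_univ _, ?_⟩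
      have hunion : (⋃ i, (Fin.cons g A : Fin (n + 1) → G) i • X) = g • X ∪ ⋃ i, A i • X := by
        ext z
        simp [Fin.exists_fin_succ]
      have hie := Set.ncard_union_add_ncard_inter (g • X) (⋃ i, A i • X)
      rw [Set.ncard_smul_set] at hie
      simp only [hP, hunion, add_mul, one_mul]
      omega) k le_rfl
  rw [tupleProp, le_div_iff₀ (by positivity), ← mul_pow]
  refine hcount.trans ?_
  rw [Nat.card_eq_fintype_card, Fintype.card_subtype]
  refine Nat.cast_le.2 (Finset.card_le_card fun A hA => ?_)
  refine Finset.mem_filter.2 ⟨Finset.mem_univ _, ?_⟩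
  have h1 : (k : ℝ) * X.ncard ≤ 2 * (⋃ i, A i • X).ncard := by
    exact_mod_cast ((hP k A).1 (Finset.mem_filter.1 hA).2).1
  have hsqrt : 2 * Real.sqrt k ≤ k := by
    have h2 : 2 ≤ Real.sqrt k := Real.le_sqrt_of_sq_le (by linarith)
    nlinarith [Real.sq_sqrt hk0.le]
  nlinarith [mul_le_mul_of_nonneg_right hsqrt (Nat.cast_nonneg (α := ℝ) X.ncard)]
end

section
/- Let G be a finite group acting transitively on a finite set Ω with |Ω| = n, let m ≥ 1 be a real number, let X ⊆ Ω with |X| ≥ n/m, and let k be an integer with k ≥ 4·m·log n. Then the proportion of tuples B = (g₁,…,g_k) ∈ G^k with X^B = Ω is at least 1 − 2^(−k/m). -/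
/-!
The expected number of points of `Ω` missed by `X^B` is small. By transitivity, `g • X` with `g`
uniform contains a given point `ω` with probability exactly `|X| / n ≥ 1 / m`
(`card_smul_mem_mul`), so `k` independent translates all miss `ω` with probability
`(1 - |X| / n)^k ≤ exp (-k / m)`. A union bound over the `n` points gives failure probability at
most `n * exp (-k / m)`; since `log n ≤ k / (4 * m)` this is at most `exp (-(3 / 4) * k / m)`, and
`log 2 ≤ 3 / 4` finishes the estimate.
-/

open scoped ENNReal Pointwise

section FillHelpers

open Classical in
/-- A uniformly random translate of `X` contains `ω` with probability `|X| / |Ω|`. The count on the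
left does not depend on `ω`, by transitivity, so it can be averaged over `Ω` by double counting. -/
theorem card_smul_mem_mul {G Ω : Type*} [Group G] [Fintype G] [MulAction G Ω] [Fintype Ω]
    [MulAction.IsPretransitive G Ω] (X : Set Ω) (ω : Ω) :
    (Finset.univ.filter fun g : G => g⁻¹ • ω ∈ X).card * Fintype.card Ω
      = Fintype.card G * X.ncard := by
  have hconst : ∀ ω' : Ω, (Finset.univ.filter fun g : G => g⁻¹ • ω' ∈ X).card
      = (Finset.univ.filter fun g : G => g⁻¹ • ω ∈ X).card := by
    intro ω'
    obtain ⟨h, rfl⟩ := MulAction.exists_smul_eq G ω ω'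
    refine Finset.card_equiv (Equiv.mulLeft h⁻¹) fun g => ?_
    simp [mul_smul]
  have hfiber : ∀ g : G, (Finset.univ.filter fun ω' : Ω => g⁻¹ • ω' ∈ X).card = X.ncard := by
    intro g
    rw [Set.ncard_eq_toFinset_card']
    refine Finset.card_equiv (MulAction.toPerm g⁻¹) fun ω' => ?_
    simp
  have hdouble := Finset.sum_card_bipartiteAbove_eq_sum_card_bipartiteBelow
    (s := (Finset.univ : Finset Ω)) (t := (Finset.univ : Finset G)) fun ω' g => g⁻¹ • ω' ∈ X
  simp only [Finset.bipartiteAbove, Finset.bipartiteBelow, hconst, hfiber, Finset.sum_const,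
    Finset.card_univ, smul_eq_mul] at hdouble
  rw [mul_comm, hdouble]

open Classical in
/-- The tuples all of whose translates of `X` miss `ω` form a `k`-th power `S^k` with
`|S| ≤ (1 - 1 / m) * |G|`. -/
theorem card_miss_le {G Ω : Type*} [Group G] [Fintype G] [MulAction G Ω] [Fintype Ω]
    [MulAction.IsPretransitive G Ω] (m : ℝ) (X : Set Ω)
    (hX : (Fintype.card Ω : ℝ) / m ≤ (X.ncard : ℝ)) (k : ℕ) (ω : Ω) :
    ((Finset.univ.filter fun B : Fin k → G => ω ∉ ⋃ i, B i • X).card : ℝ)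
      ≤ (Fintype.card G : ℝ) ^ k * Real.exp (-(k : ℝ) / m) := by
  set S : Finset G := Finset.univ.filter fun g : G => ¬ g⁻¹ • ω ∈ X with hS
  have hpow : (Finset.univ.filter fun B : Fin k → G => ω ∉ ⋃ i, B i • X)
      = Fintype.piFinset fun _ => S := by
    ext B
    simp [hS, Set.mem_smul_set_iff_inv_smul_mem]
  have hsplit := Finset.card_filter_add_card_filter_not (s := (Finset.univ : Finset G))
    (fun g : G => g⁻¹ • ω ∈ X)
  have hcount := card_smul_mem_mul (G := G) X ω
  have hn : (0 : ℝ) < Fintype.card Ω := by exact_mod_cast Fintype.card_pos_iff.mpr ⟨ω⟩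
  rw [← hS, Finset.card_univ] at hsplit
  set c := (Finset.univ.filter fun g : G => g⁻¹ • ω ∈ X).card
  have hsplit' : (c : ℝ) + S.card = Fintype.card G := by exact_mod_cast hsplit
  have hcount' : (c : ℝ) * Fintype.card Ω = Fintype.card G * X.ncard := by exact_mod_cast hcount
  have hc : (Fintype.card G : ℝ) * (1 / m) ≤ c := by
    refine le_of_mul_le_mul_right ?_ hn
    rw [hcount', mul_assoc]
    refine mul_le_mul_of_nonneg_left ?_ (Nat.cast_nonneg _)
    rwa [one_div_mul_eq_div]
  have hSle : (S.card : ℝ) ≤ Fintype.card G * Real.exp (-(1 / m)) := by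
    have h1 := mul_le_mul_of_nonneg_left (Real.add_one_le_exp (-(1 / m)))
      (Nat.cast_nonneg (α := ℝ) (Fintype.card G))
    linarith
  rw [hpow, Fintype.card_piFinset_const, Nat.cast_pow]
  calc (S.card : ℝ) ^ k ≤ (Fintype.card G * Real.exp (-(1 / m))) ^ k := by gcongr
    _ = _ := by
      rw [mul_pow, ← Real.exp_nat_mul]
      congr 2
      ring

/-- The numerical estimate closing the union bound. At `n = 0` the left side vanishes. -/
theorem mul_exp_le_two_rpow (n k : ℕ) (m : ℝ) (hm : 1 ≤ m)
    (hk : 4 * m * Real.log n ≤ (k : ℝ)) :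
    (n : ℝ) * Real.exp (-(k : ℝ) / m) ≤ (2 : ℝ) ^ (-(k : ℝ) / m) := by
  have hm0 : 0 < m := by linarith
  rcases Nat.eq_zero_or_pos n with rfl | hn
  · simp only [Nat.cast_zero, zero_mul]
    positivity
  · have hn' : (0 : ℝ) < n := by exact_mod_cast hn
    have hlog : 4 * Real.log n ≤ (k : ℝ) / m := by
      rw [le_div_iff₀ hm0]
      linarith
    have hq : 0 ≤ (k : ℝ) / m := by positivity
    rw [Real.rpow_def_of_pos two_pos]
    nth_rewrite 1 [← Real.exp_log hn']
    rw [← Real.exp_add, Real.exp_le_exp, neg_div]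
    nlinarith [Real.log_two_lt_d9]

end FillHelpers

/-- Filling: if `|X| ≥ n/m` and `k ≥ 4·m·log n`, then the proportion of tuples `B ∈ G^k` with
`X^B = Ω` is at least `1 − 2^(−k/m)`. -/
theorem fill_with_random_elements {G Ω : Type*} [Group G] [Fintype G]
    [MulAction G Ω] [Fintype Ω]
    (htrans : MulAction.IsPretransitive G Ω)
    (m : ℝ) (hm : 1 ≤ m) (X : Set Ω)
    (hX : (Fintype.card Ω : ℝ) / m ≤ (X.ncard : ℝ))
    (k : ℕ) (hk : 4 * m * Real.log (Fintype.card Ω) ≤ (k : ℝ)) :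
    1 - (2 : ℝ) ^ (-(k : ℝ) / m) ≤
      tupleProp G (fun B : Fin k → G => (⋃ i, B i • X) = (Set.univ : Set Ω)) := by
  classical
  have := htrans
  have hG : (0 : ℝ) < (Fintype.card G : ℝ) ^ k := by
    have : 0 < Fintype.card G := Fintype.card_pos
    positivity
  set good : Finset (Fin k → G) :=
    Finset.univ.filter fun B => (⋃ i, B i • X) = (Set.univ : Set Ω) with hgood
  set bad : Finset (Fin k → G) :=
    Finset.univ.filter fun B => ¬ (⋃ i, B i • X) = (Set.univ : Set Ω) with hbad
  have hsplit : (good.card : ℝ) + bad.card = (Fintype.card G : ℝ) ^ k := by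
    have h := Finset.card_filter_add_card_filter_not (s := (Finset.univ : Finset (Fin k → G)))
      (fun B => (⋃ i, B i • X) = (Set.univ : Set Ω))
    rw [Finset.card_univ, Fintype.card_fun, Fintype.card_fin] at h
    exact_mod_cast h
  have hsub : bad ⊆ Finset.univ.biUnion fun ω : Ω =>
      Finset.univ.filter fun B : Fin k → G => ω ∉ ⋃ i, B i • X := by
    intro B hB
    simpa [hbad, Set.eq_univ_iff_forall] using hB
  have hbadle : (bad.card : ℝ) ≤ (Fintype.card G : ℝ) ^ k * (2 : ℝ) ^ (-(k : ℝ) / m) := by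
    calc (bad.card : ℝ)
        ≤ ∑ ω : Ω, ((Finset.univ.filter fun B : Fin k → G => ω ∉ ⋃ i, B i • X).card : ℝ) := by
          exact_mod_cast (Finset.card_le_card hsub).trans Finset.card_biUnion_le
      _ ≤ ∑ _ω : Ω, (Fintype.card G : ℝ) ^ k * Real.exp (-(k : ℝ) / m) :=
          Finset.sum_le_sum fun ω _ => card_miss_le m X hX k ω
      _ = (Fintype.card G : ℝ) ^ k * (Fintype.card Ω * Real.exp (-(k : ℝ) / m)) := by
          rw [Finset.sum_const, Finset.card_univ, nsmul_eq_mul]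
          ring
      _ ≤ _ := by
          gcongr
          exact mul_exp_le_two_rpow _ _ m hm hk
  have hcard : Nat.card {B : Fin k → G // (⋃ i, B i • X) = (Set.univ : Set Ω)} = good.card := by
    rw [Nat.card_eq_fintype_card, Fintype.card_subtype]
  unfold tupleProp
  rw [hcard, le_div_iff₀ hG]
  linarith
end

section
/- Let G be a finite group acting transitively on a finite set Ω, let ω ∈ Ω, let t, k ≥ 1 be integers, and let η ∈ [0,1]. Suppose that the proportion of tuples A ∈ G^k with S_A(ω, t) = Ω is at least 1 − η. Then the proportion of tuples B ∈ G^(2k) for which the diameter of the Schreier graph Sch(G↷Ω, B) is at most 2t is at least 1 − 2η. -/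
/-!
Write a tuple `B ∈ G^(2k)` as the concatenation of `A` and `C⁻¹` (entrywise inverse) with
`A, C ∈ G^k`. If the spheres of radius `t` around `ω` for `A` and for `C` are both all of `Ω`, then
`B` has Schreier diameter at most `2t`: for given `x, y`, the point `x` is a word of length `t` in
`C` applied to `ω`, so the inverse of that word, a word of length `t` in `C⁻¹`, leads from `x` to
`ω`, and a word of length `t` in `A` leads from `ω` to `y`
(`schreierDiam_le_of_sphereSet_eq_univ`).

As `(A, C) ↦ B` is injective, the proportion of tuples `B` of small diameter is at least the square
of the proportion of tuples in `G^k` with full sphere, hence at least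
`(1 - η) ^ 2 ≥ 1 - 2 * η`.
-/

open scoped ENNReal Pointwise

/-- Splitting the `2k` indices into two blocks of length `k`. -/
def blockEquiv (k : ℕ) : Fin k ⊕ Fin k ≃ Fin (2 * k) :=
  finSumFinEquiv.trans (finCongr (two_mul k).symm)

/-- The concatenation in `G^(2k)` of `A` with the entrywise inverse of `C`. -/
def appendInv {G : Type*} [Group G] {k : ℕ} (A C : Fin k → G) : Fin (2 * k) → G :=
  Sum.elim A C⁻¹ ∘ (blockEquiv k).symm

lemma appendInv_inl {G : Type*} [Group G] {k : ℕ} (A C : Fin k → G) (i : Fin k) :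
    appendInv A C (blockEquiv k (Sum.inl i)) = A i := by
  simp [appendInv]

lemma appendInv_inr {G : Type*} [Group G] {k : ℕ} (A C : Fin k → G) (i : Fin k) :
    appendInv A C (blockEquiv k (Sum.inr i)) = (C i)⁻¹ := by
  simp [appendInv]

lemma appendInv_injective {G : Type*} [Group G] {k : ℕ} :
    Function.Injective (fun p : (Fin k → G) × (Fin k → G) => appendInv p.1 p.2) := by
  rintro ⟨A, C⟩ ⟨A', C'⟩ h
  replace h : appendInv A C = appendInv A' C' := h
  refine Prod.ext (funext fun i => ?_) (funext fun i => ?_)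
  · simpa only [appendInv_inl] using congrFun h (blockEquiv k (Sum.inl i))
  · simpa only [appendInv_inr, inv_inj] using congrFun h (blockEquiv k (Sum.inr i))

/-- Going from `x` to `ω` along the inverse of a word in `C`, then from `ω` to `y` along a word in
`A`, bounds the diameter for the concatenated tuple. -/
lemma schreierDiam_le_of_sphereSet_eq_univ {G Ω : Type*} [Group G] [MulAction G Ω] {k t : ℕ}
    {ω : Ω} {A C : Fin k → G} (hA : sphereSet A ω t = Set.univ)
    (hC : sphereSet C ω t = Set.univ) :
    schreierDiam G Ω (appendInv A C) ≤ ((2 * t : ℕ) : ℕ∞) := by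
  refine sInf_le ⟨2 * t, rfl, fun x y => ?_⟩
  obtain ⟨f, hf⟩ : y ∈ sphereSet A ω t := hA ▸ Set.mem_univ y
  obtain ⟨g, hg⟩ : x ∈ sphereSet C ω t := hC ▸ Set.mem_univ x
  -- The word: `f` in the first block, followed by `g` read backwards in the second block.
  let l : List (Fin (2 * k)) :=
    (List.ofFn f).map (fun i => blockEquiv k (Sum.inl i)) ++
      ((List.ofFn g).map (fun i => blockEquiv k (Sum.inr i))).reverse
  have hl : (l.map (appendInv A C)).prod =
      (List.ofFn (A ∘ f)).prod * (List.ofFn (C ∘ g)).prod⁻¹ := by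
    simp only [l, List.map_append, List.map_reverse, List.prod_append,
      List.prod_inv_reverse, List.map_ofFn, Function.comp_def, appendInv_inl, appendInv_inr]
  refine ⟨l.length, by simp [l, two_mul], l.get, ?_⟩
  rw [← List.map_ofFn, List.ofFn_get, hl, mul_smul, ← hg, inv_smul_smul, hf]

/-- If with probability at least `1 − η` the sphere `S_A(ω, t)` is all of `Ω` for `A ∈ G^k`,
then with probability at least `1 − 2η` a tuple `B ∈ G^(2k)` gives a Schreier graph of diameter
at most `2t`. -/
theorem diameter_bound_of_full_sphere {G Ω : Type*} [Group G] [Fintype G]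
    [MulAction G Ω] [Fintype Ω]
    (htrans : MulAction.IsPretransitive G Ω)
    (ω : Ω) (t k : ℕ) (ht : 1 ≤ t) (hk : 1 ≤ k)
    (η : ℝ) (hη : η ∈ Set.Icc (0 : ℝ) 1)
    (h : 1 - η ≤ tupleProp G (fun A : Fin k → G => sphereSet A ω t = (Set.univ : Set Ω))) :
    1 - 2 * η ≤ tupleProp G (fun B : Fin (2 * k) → G =>
      schreierDiam G Ω B ≤ ((2 * t : ℕ) : ℕ∞)) := by
  obtain ⟨hη0, hη1⟩ := hη
  have hcard : Nat.card {A : Fin k → G // sphereSet A ω t = Set.univ} *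
      Nat.card {A : Fin k → G // sphereSet A ω t = Set.univ} ≤
      Nat.card {B : Fin (2 * k) → G // schreierDiam G Ω B ≤ ((2 * t : ℕ) : ℕ∞)} := by
    rw [← Nat.card_prod]
    refine Nat.card_le_card_of_injective
      (fun p => ⟨appendInv p.1.1 p.2.1,
        schreierDiam_le_of_sphereSet_eq_univ p.1.2 p.2.2⟩) ?_
    rintro ⟨A, C⟩ ⟨A', C'⟩ hAC
    have := @appendInv_injective G _ k (A.1, C.1) (A'.1, C'.1) (congrArg Subtype.val hAC)
    rw [Prod.mk.injEq] at this
    exact Prod.ext (Subtype.ext this.1) (Subtype.ext this.2)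
  have hsq : tupleProp G (fun A : Fin k → G => sphereSet A ω t = (Set.univ : Set Ω)) ^ 2 ≤
      tupleProp G (fun B : Fin (2 * k) → G => schreierDiam G Ω B ≤ ((2 * t : ℕ) : ℕ∞)) := by
    unfold tupleProp
    rw [div_pow, ← pow_mul, mul_comm k 2, pow_two (Nat.card _ : ℝ)]
    gcongr
    exact_mod_cast hcard
  calc 1 - 2 * η ≤ (1 - η) ^ 2 := by nlinarith [sq_nonneg η]
    _ ≤ _ := pow_le_pow_left₀ (sub_nonneg.mpr hη1) h 2
    _ ≤ _ := hsq
end
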